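/- Let (M,g,J) be a nearly Kähler manifold with special algebraic torsion TM = V ⊕ H (ξ_V V = 0, ξ_H H = V, both distributions J-stable and ∇^{U(n)}-parallel). If r has a single eigenvalue k on H and eigenvalue l on V, then 2 l dim V = k dim H. More generally, if H = E ⊕ F with ξ_E E = ξ_F F = 0, ξ_E F = V, ξ_V E = F, ξ_V F = E, and r has eigenvalues l, k, m on V, E, F respectively, then l dim V = k dim E = m dim F. -/

import Mathlib

open scoped RealInnerProductSpace

/-!
The tensor `⟪ξ_X Y, Z⟫` is a 3-form, so the squared norm `N A B C` of its component in `A ⊗ B ⊗ C`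
does not depend on the order of `A`, `B`, `C`. Summing `r(X, X) = 4 ∑ ‖ξ_X eᵢ‖²` over an orthonormal
basis of a summand `A` on which `r = c ⟪·, ·⟫` gives `c dim A = 4 ∑ N A B C`, where `B` and `C` run
over all the summands. In the first case only the permutations of `N V H H` survive: one of them
starts with `V` and two with `H`. In the second only the permutations of `N V E F` survive, two for
each first summand.
-/

section TotallySkewTorsion

variable {W : Type*} [NormedAddCommGroup W] [InnerProductSpace ℝ W]

theorem trace_comp_self_eq_neg_sum_inner_sq {ι : Type*} [Fintype ι]
    (b : OrthonormalBasis ι ℝ W) {T : W →ₗ[ℝ] W} (hT : ∀ Y Z, ⟪T Y, Z⟫ = -⟪Y, T Z⟫) :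
    LinearMap.trace ℝ W (T ∘ₗ T) = -∑ i, ∑ j, ⟪T (b i), b j⟫ ^ 2 := by
  simp only [LinearMap.trace_eq_sum_inner _ b, ← Finset.sum_neg_distrib]
  refine Finset.sum_congr rfl fun i _ ↦ ?_
  rw [Finset.sum_neg_distrib, b.sum_sq_inner_left, ← real_inner_self_eq_norm_sq, hT, neg_neg,
    LinearMap.comp_apply]

/-- The form `r(X, Y) = -4 trace (ξ_X ∘ ξ_Y)` of a torsion tensor `ξ`, whose eigenvalues the
dimension relations involve. -/
noncomputable def torsionForm (ξ : W →ₗ[ℝ] W →ₗ[ℝ] W) (X Y : W) : ℝ :=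
  -4 * LinearMap.trace ℝ W (ξ X ∘ₗ ξ Y)

variable [FiniteDimensional ℝ W] {ξ : W →ₗ[ℝ] W →ₗ[ℝ] W} {A B C V H : Submodule ℝ W}

/-- The squared norm of the component of the tensor `⟪ξ_X Y, Z⟫` in `A ⊗ B ⊗ C`, the quantity
through which the dimensions of the summands are compared. It is written in the standard orthonormal
bases of `A`, `B` and `C`, so that its symmetries hold term by term. -/
noncomputable def componentNormSq (ξ : W →ₗ[ℝ] W →ₗ[ℝ] W) (A B C : Submodule ℝ W) : ℝ :=
  ∑ i, ∑ j, ∑ k, ⟪ξ (stdOrthonormalBasis ℝ A i) (stdOrthonormalBasis ℝ B j),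
    (stdOrthonormalBasis ℝ C k : W)⟫ ^ 2

theorem componentNormSq_left_comm (halt : ∀ X Y, ξ X Y = -ξ Y X) (A B C : Submodule ℝ W) :
    componentNormSq ξ A B C = componentNormSq ξ B A C := by
  have hsq (X Y Z : W) : ⟪ξ X Y, Z⟫ ^ 2 = ⟪ξ Y X, Z⟫ ^ 2 := by
    rw [halt X Y, inner_neg_left, neg_sq]
  simp only [componentNormSq, hsq (stdOrthonormalBasis ℝ A _ : W)]
  exact Finset.sum_comm

theorem componentNormSq_right_comm (hskew : ∀ X Y Z, ⟪ξ X Y, Z⟫ = -⟪Y, ξ X Z⟫)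
    (A B C : Submodule ℝ W) : componentNormSq ξ A B C = componentNormSq ξ A C B := by
  have hsq (X Y Z : W) : ⟪ξ X Y, Z⟫ ^ 2 = ⟪ξ X Z, Y⟫ ^ 2 := by
    rw [hskew X Y Z, neg_sq, real_inner_comm]
  unfold componentNormSq
  refine Finset.sum_congr rfl fun i _ ↦ Finset.sum_comm.trans ?_
  simp only [hsq _ (stdOrthonormalBasis ℝ B _ : W)]

theorem componentNormSq_eq_zero (h : ∀ a ∈ A, ∀ b ∈ B, ∀ c ∈ C, ⟪ξ a b, c⟫ = 0) :
    componentNormSq ξ A B C = 0 := by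
  simp [componentNormSq, h]

theorem componentNormSq_left_middle_eq_zero (hA : ∀ a ∈ A, ∀ b ∈ A, ξ a b = 0)
    (B : Submodule ℝ W) : componentNormSq ξ A A B = 0 :=
  componentNormSq_eq_zero fun a ha b hb c _ ↦ by rw [hA a ha b hb, inner_zero_left]

theorem componentNormSq_left_right_eq_zero (hskew : ∀ X Y Z, ⟪ξ X Y, Z⟫ = -⟪Y, ξ X Z⟫)
    (hA : ∀ a ∈ A, ∀ b ∈ A, ξ a b = 0) (B : Submodule ℝ W) : componentNormSq ξ A B A = 0 :=
  (componentNormSq_right_comm hskew A B A).trans (componentNormSq_left_middle_eq_zero hA B)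

theorem componentNormSq_middle_right_eq_zero (halt : ∀ X Y, ξ X Y = -ξ Y X)
    (hskew : ∀ X Y Z, ⟪ξ X Y, Z⟫ = -⟪Y, ξ X Z⟫) (hA : ∀ a ∈ A, ∀ b ∈ A, ξ a b = 0)
    (B : Submodule ℝ W) : componentNormSq ξ B A A = 0 :=
  (componentNormSq_left_comm halt B A A).trans (componentNormSq_left_right_eq_zero hskew hA B)

section OrthogonalDecomposition

variable {ι : Type*} [Fintype ι] {U : ι → Submodule ℝ W}

theorem torsionForm_self_eq_sum_inner_sq (hU : Pairwise fun i j ↦ U i ⟂ U j)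
    (htop : ⨆ i, U i = ⊤) (hskew : ∀ X Y Z, ⟪ξ X Y, Z⟫ = -⟪Y, ξ X Z⟫) (X : W) :
    torsionForm ξ X X = 4 * ∑ i, ∑ j, ∑ p, ∑ q,
      ⟪ξ X (stdOrthonormalBasis ℝ (U i) p), (stdOrthonormalBasis ℝ (U j) q : W)⟫ ^ 2 := by
  classical
  have hfam : OrthogonalFamily ℝ (fun i ↦ U i) fun i ↦ (U i).subtypeₗᵢ := .of_pairwise hU
  have hint : DirectSum.IsInternal U := by
    rw [hfam.isInternal_iff, htop, Submodule.top_orthogonal_eq_bot]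
  let b := hint.collectedOrthonormalBasis hfam fun i ↦ stdOrthonormalBasis ℝ (U i)
  have hb (a : Σ i, Fin (Module.finrank ℝ (U i))) :
      b a = (stdOrthonormalBasis ℝ (U a.1) a.2 : W) := by
    simp [b, DirectSum.IsInternal.collectedOrthonormalBasis]
  rw [torsionForm, trace_comp_self_eq_neg_sum_inner_sq b (hskew X), neg_mul_neg]
  simp only [hb, Fintype.sum_sigma]
  exact congrArg (4 * ·) (Finset.sum_congr rfl fun i _ ↦ Finset.sum_comm)

theorem sum_torsionForm_eq_sum_componentNormSq (hU : Pairwise fun i j ↦ U i ⟂ U j)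
    (htop : ⨆ i, U i = ⊤) (hskew : ∀ X Y Z, ⟪ξ X Y, Z⟫ = -⟪Y, ξ X Z⟫) (A : Submodule ℝ W) :
    ∑ a, torsionForm ξ (stdOrthonormalBasis ℝ A a) (stdOrthonormalBasis ℝ A a) =
      4 * ∑ i, ∑ j, componentNormSq ξ A (U i) (U j) := by
  simp only [torsionForm_self_eq_sum_inner_sq hU htop hskew, componentNormSq, ← Finset.mul_sum]
  rw [Finset.sum_comm]
  exact congrArg (4 * ·) (Finset.sum_congr rfl fun i _ ↦ Finset.sum_comm)

theorem mul_finrank_eq_sum_componentNormSq (hU : Pairwise fun i j ↦ U i ⟂ U j)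
    (htop : ⨆ i, U i = ⊤) (hskew : ∀ X Y Z, ⟪ξ X Y, Z⟫ = -⟪Y, ξ X Z⟫) {c : ℝ}
    (hc : ∀ a ∈ A, ∀ b ∈ A, torsionForm ξ a b = c * ⟪a, b⟫) :
    c * (Module.finrank ℝ A : ℝ) = 4 * ∑ i, ∑ j, componentNormSq ξ A (U i) (U j) := by
  rw [← sum_torsionForm_eq_sum_componentNormSq hU htop hskew A]
  have hself (i) : torsionForm ξ (stdOrthonormalBasis ℝ A i) (stdOrthonormalBasis ℝ A i) = c := by
    rw [hc _ (Subtype.prop _) _ (Subtype.prop _), ← Submodule.coe_inner,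
      real_inner_self_eq_norm_sq, OrthonormalBasis.norm_eq_one, one_pow, mul_one]
  simp [hself, mul_comm]

end OrthogonalDecomposition

theorem two_mul_mul_finrank_eq_mul_finrank (halt : ∀ X Y, ξ X Y = -ξ Y X)
    (hskew : ∀ X Y Z, ⟪ξ X Y, Z⟫ = -⟪Y, ξ X Z⟫) (hsplit : V ⊔ H = ⊤) (horth : V ⟂ H)
    (hVV : ∀ v ∈ V, ∀ w ∈ V, ξ v w = 0) (hHH : ∀ x ∈ H, ∀ y ∈ H, ξ x y ∈ V) {l k : ℝ}
    (hl : ∀ v ∈ V, ∀ w ∈ V, torsionForm ξ v w = l * ⟪v, w⟫)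
    (hk : ∀ x ∈ H, ∀ y ∈ H, torsionForm ξ x y = k * ⟪x, y⟫) :
    2 * l * (Module.finrank ℝ V : ℝ) = k * (Module.finrank ℝ H : ℝ) := by
  let U : Fin 2 → Submodule ℝ W := ![V, H]
  have hU : Pairwise fun i j ↦ U i ⟂ U j := by
    simp [Pairwise, Fin.forall_fin_two, U, horth, horth.symm]
  have htop : ⨆ i, U i = ⊤ := by
    simpa [← Finset.sup_univ_eq_iSup, Fin.univ_succ, U] using hsplit
  have hHHH : componentNormSq ξ H H H = 0 :=
    componentNormSq_eq_zero fun x hx y hy z hz ↦ horth.inner_eq (hHH x hx y hy) hz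
  have hVdim : l * (Module.finrank ℝ V : ℝ) = 4 * componentNormSq ξ V H H := by
    rw [mul_finrank_eq_sum_componentNormSq hU htop hskew hl]
    simp [U, Fin.sum_univ_two, componentNormSq_left_middle_eq_zero hVV,
      componentNormSq_left_right_eq_zero hskew hVV]
  have hHdim : k * (Module.finrank ℝ H : ℝ) =
      4 * (componentNormSq ξ H V H + componentNormSq ξ H H V) := by
    rw [mul_finrank_eq_sum_componentNormSq hU htop hskew hk]
    simp [U, Fin.sum_univ_two, hHHH, componentNormSq_middle_right_eq_zero halt hskew hVV]
  have hHVH := componentNormSq_left_comm halt H V H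
  have hHHV := componentNormSq_right_comm hskew H H V
  linarith

theorem sum_componentNormSq_eq_two_mul_of_isotropic (halt : ∀ X Y, ξ X Y = -ξ Y X)
    (hskew : ∀ X Y Z, ⟪ξ X Y, Z⟫ = -⟪Y, ξ X Z⟫) {U : Fin 3 → Submodule ℝ W}
    (hiso : ∀ i, ∀ x ∈ U i, ∀ y ∈ U i, ξ x y = 0) (i : Fin 3) :
    ∑ j, ∑ k, componentNormSq ξ (U i) (U j) (U k) =
      2 * componentNormSq ξ (U 0) (U 1) (U 2) := by
  have hlm (i j : Fin 3) := componentNormSq_left_middle_eq_zero (hiso i) (U j)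
  have hlr (i j : Fin 3) := componentNormSq_left_right_eq_zero hskew (hiso i) (U j)
  have hmr (i j : Fin 3) := componentNormSq_middle_right_eq_zero halt hskew (hiso i) (U j)
  have h021 := componentNormSq_right_comm hskew (U 0) (U 2) (U 1)
  have h102 := componentNormSq_left_comm halt (U 1) (U 0) (U 2)
  have h120 := componentNormSq_right_comm hskew (U 1) (U 2) (U 0)
  have h201 := componentNormSq_left_comm halt (U 2) (U 0) (U 1)
  have h210 := componentNormSq_right_comm hskew (U 2) (U 1) (U 0)
  obtain rfl | rfl | rfl : i = 0 ∨ i = 1 ∨ i = 2 := by omega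
  all_goals
    simp only [Fin.sum_univ_three, hlm, hlr, hmr]
    linarith

theorem mul_finrank_eq_mul_finrank_of_isotropic (halt : ∀ X Y, ξ X Y = -ξ Y X)
    (hskew : ∀ X Y Z, ⟪ξ X Y, Z⟫ = -⟪Y, ξ X Z⟫) {E F : Submodule ℝ W} (hsplit : V ⊔ (E ⊔ F) = ⊤)
    (hVE : V ⟂ E) (hVF : V ⟂ F) (hEF : E ⟂ F) (hVV : ∀ v ∈ V, ∀ w ∈ V, ξ v w = 0)
    (hEE : ∀ x ∈ E, ∀ y ∈ E, ξ x y = 0) (hFF : ∀ x ∈ F, ∀ y ∈ F, ξ x y = 0) {l k m : ℝ}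
    (hl : ∀ v ∈ V, ∀ w ∈ V, torsionForm ξ v w = l * ⟪v, w⟫)
    (hk : ∀ x ∈ E, ∀ y ∈ E, torsionForm ξ x y = k * ⟪x, y⟫)
    (hm : ∀ x ∈ F, ∀ y ∈ F, torsionForm ξ x y = m * ⟪x, y⟫) :
    l * (Module.finrank ℝ V : ℝ) = k * (Module.finrank ℝ E : ℝ) ∧
      k * (Module.finrank ℝ E : ℝ) = m * (Module.finrank ℝ F : ℝ) := by
  let U : Fin 3 → Submodule ℝ W := ![V, E, F]
  have hU : Pairwise fun i j ↦ U i ⟂ U j := by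
    simp [Pairwise, Fin.forall_fin_succ, U, hVE, hVE.symm, hVF, hVF.symm, hEF, hEF.symm]
  have htop : ⨆ i, U i = ⊤ := by simpa [U, sup_assoc] using hsplit
  have hiso (i : Fin 3) : ∀ x ∈ U i, ∀ y ∈ U i, ξ x y = 0 := by
    fin_cases i
    exacts [hVV, hEE, hFF]
  have hdim (i : Fin 3) {c : ℝ} (hc : ∀ x ∈ U i, ∀ y ∈ U i, torsionForm ξ x y = c * ⟪x, y⟫) :
      c * (Module.finrank ℝ (U i) : ℝ) = 4 * (2 * componentNormSq ξ V E F) := by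
    rw [mul_finrank_eq_sum_componentNormSq hU htop hskew hc]
    exact congrArg (4 * ·) (sum_componentNormSq_eq_two_mul_of_isotropic halt hskew hiso i)
  exact ⟨(hdim 0 hl).trans (hdim 1 hk).symm, (hdim 1 hk).trans (hdim 2 hm).symm⟩

end TotallySkewTorsion

theorem stmt5_general
    {W : Type*} [NormedAddCommGroup W] [InnerProductSpace ℝ W] [FiniteDimensional ℝ W]
    (ξ : W →ₗ[ℝ] W →ₗ[ℝ] W)
    (hξskew : ∀ X Y Z, ⟪ξ X Y, Z⟫ = -⟪Y, ξ X Z⟫)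
    (hξalt : ∀ X Y, ξ X Y = -ξ Y X)
    (r : W → W → ℝ)
    (hr : ∀ X Y, r X Y = -4 * LinearMap.trace ℝ W (ξ X ∘ₗ ξ Y))
    (V H : Submodule ℝ W)
    (hsplit : V ⊔ H = ⊤)
    (horth : ∀ v ∈ V, ∀ x ∈ H, ⟪v, x⟫ = 0)
    (hξVV : ∀ v ∈ V, ∀ w ∈ V, ξ v w = 0) :
    ((∀ x ∈ H, ∀ y ∈ H, ξ x y ∈ V) → ∀ l k : ℝ,
      (∀ v ∈ V, ∀ w ∈ V, r v w = l * ⟪v, w⟫) →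
      (∀ x ∈ H, ∀ y ∈ H, r x y = k * ⟪x, y⟫) →
      2 * l * (Module.finrank ℝ V : ℝ) = k * (Module.finrank ℝ H : ℝ)) ∧
    (∀ E F : Submodule ℝ W, ∀ l k m : ℝ,
      E ⊔ F = H →
      (∀ x ∈ E, ∀ y ∈ F, ⟪x, y⟫ = 0) →
      (∀ x ∈ E, ∀ y ∈ E, ξ x y = 0) →
      (∀ x ∈ F, ∀ y ∈ F, ξ x y = 0) →
      (∀ v ∈ V, ∀ w ∈ V, r v w = l * ⟪v, w⟫) →
      (∀ x ∈ E, ∀ y ∈ E, r x y = k * ⟪x, y⟫) →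
      (∀ x ∈ F, ∀ y ∈ F, r x y = m * ⟪x, y⟫) →
      l * (Module.finrank ℝ V : ℝ) = k * (Module.finrank ℝ E : ℝ) ∧
      k * (Module.finrank ℝ E : ℝ) = m * (Module.finrank ℝ F : ℝ)) := by
  obtain rfl : r = torsionForm ξ := funext₂ hr
  have hVH : V ⟂ H := Submodule.isOrtho_iff_inner_eq.2 horth
  refine ⟨fun hξHH l k ↦ two_mul_mul_finrank_eq_mul_finrank hξalt hξskew hsplit hVH hξVV hξHH, ?_⟩
  rintro E F l k m rfl hEF hEE hFF
  exact mul_finrank_eq_mul_finrank_of_isotropic hξalt hξskew hsplit (hVH.mono_right le_sup_left)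
    (hVH.mono_right le_sup_right) (Submodule.isOrtho_iff_inner_eq.2 hEF) hξVV hEE hFF

/-- Fiberwise formulation of the dimension relations for a
nearly Kähler manifold with special algebraic torsion `TM = V ⊕ H`
(`ξ_V V = 0`, `ξ_H H = V`, both `J`-stable and parallel), where
`r(X,Y) = -4 trace (ξ_X ∘ ξ_Y)`.
(1) If `r` has the single eigenvalue `k` on `H` and eigenvalue `l` on `V`, then
`2 l dim V = k dim H`.  (2) More generally, if `H = E ⊕ F` with
`ξ_E E = ξ_F F = 0`, `ξ_E F = V`, `ξ_V E = F`, `ξ_V F = E`, and `r` has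
eigenvalues `l, k, m` on `V, E, F` respectively, then
`l dim V = k dim E = m dim F`. -/
theorem stmt5
    {W : Type*} [NormedAddCommGroup W] [InnerProductSpace ℝ W]
    [FiniteDimensional ℝ W]
    (J : W →ₗ[ℝ] W)
    (hJ2 : ∀ x, J (J x) = -x)
    (hJg : ∀ x y, ⟪J x, J y⟫ = ⟪x, y⟫)
    (ξ : W →ₗ[ℝ] W →ₗ[ℝ] W)
    (hξskew : ∀ X Y Z, ⟪ξ X Y, Z⟫ = -⟪Y, ξ X Z⟫)
    (hξalt : ∀ X Y, ξ X Y = - ξ Y X)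
    (hξJ : ∀ X Y, ξ X (J Y) + J (ξ X Y) = 0)
    (r : W → W → ℝ)
    (hr : ∀ X Y, r X Y = -4 * LinearMap.trace ℝ W (ξ X ∘ₗ ξ Y))
    (V H : Submodule ℝ W)
    (hsplit : V ⊔ H = ⊤)
    (horth : ∀ v ∈ V, ∀ x ∈ H, ⟪v, x⟫ = 0)
    (hJV : ∀ v ∈ V, J v ∈ V) (hJH : ∀ x ∈ H, J x ∈ H)
    (hξVV : ∀ v ∈ V, ∀ w ∈ V, ξ v w = 0)
    (hξHH : ∀ x ∈ H, ∀ y ∈ H, ξ x y ∈ V)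
    (hξHHspan : V ≤ Submodule.span ℝ {z | ∃ x ∈ H, ∃ y ∈ H, z = ξ x y}) :
    -- (1) single eigenvalue on H :
    (∀ l k : ℝ,
      (∀ v ∈ V, ∀ w ∈ V, r v w = l * ⟪v, w⟫) →
      (∀ x ∈ H, ∀ y ∈ H, r x y = k * ⟪x, y⟫) →
      2 * l * (Module.finrank ℝ V : ℝ) = k * (Module.finrank ℝ H : ℝ)) ∧
    -- (2) the splitting H = E ⊕ F :
    (∀ E F : Submodule ℝ W, ∀ l k m : ℝ,
      E ⊔ F = H →
      (∀ x ∈ E, ∀ y ∈ F, ⟪x, y⟫ = 0) →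
      (∀ x ∈ E, J x ∈ E) → (∀ y ∈ F, J y ∈ F) →
      (∀ x ∈ E, ∀ y ∈ E, ξ x y = 0) →
      (∀ x ∈ F, ∀ y ∈ F, ξ x y = 0) →
      (∀ x ∈ E, ∀ y ∈ F, ξ x y ∈ V) →
      (∀ v ∈ V, ∀ x ∈ E, ξ v x ∈ F) →
      (∀ v ∈ V, ∀ y ∈ F, ξ v y ∈ E) →
      (∀ v ∈ V, ∀ w ∈ V, r v w = l * ⟪v, w⟫) →
      (∀ x ∈ E, ∀ y ∈ E, r x y = k * ⟪x, y⟫) →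
      (∀ x ∈ F, ∀ y ∈ F, r x y = m * ⟪x, y⟫) →
      l * (Module.finrank ℝ V : ℝ) = k * (Module.finrank ℝ E : ℝ) ∧
      k * (Module.finrank ℝ E : ℝ) = m * (Module.finrank ℝ F : ℝ)) := by
  have hdim := stmt5_general ξ hξskew hξalt r hr V H hsplit horth hξVV
  exact ⟨hdim.1 hξHH, fun E F l k m hsum hEF _ _ hEE hFF _ _ _ ↦ hdim.2 E F l k m hsum hEF hEE hFF⟩
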